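/- For n ≥ 0 let B_n = (10^n, 3·10^n) ⊂ ℝ and U = ⋃_{n≥0} B_n. Let h₁, h₂ : ℝ → ℝ be homeomorphisms such that h₁(x) = x/20 + 15·10^{n−2} for x ∈ B_n (n > 0), h₁(x) = x/20 + 1 for x ≤ 3, h₂(x) = 5x + 5·10^n for x ∈ B_n (n > 0), h₂(x) = 5x + 5 for x ≤ 3, and such that the iterated function system (h₁, h₂) with constant probabilities p₁, p₂ = 1 − p₁ satisfies the contracting-on-average condition on all of ℝ, where p₁ > log(50/7)/log(500/17). Then the unique invariant probability measure ν (satisfying ν = p₁·(h₁)_*ν + p₂·(h₂)_*ν) has Hausdorff dimension dim_H(ν) = (p₁ log p₁ + p₂ log p₂) / (−2 p₁ log 2 − (p₁ − p₂) log 5). -/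

import Mathlib

open MeasureTheory Metric Filter ENNReal NNReal

noncomputable section

/-- The upper Hausdorff dimension of a measure: the infimum of the Hausdorff
dimensions of sets of full measure. -/
def upperDimH {X : Type*} [EMetricSpace X] [MeasurableSpace X]
    (μ : Measure X) : ℝ≥0∞ :=
  ⨅ (s : Set X) (_ : μ sᶜ = 0), dimH s

/-- The lower Hausdorff dimension of a measure: the infimum of the Hausdorff
dimensions of sets of positive measure. -/
def lowerDimH {X : Type*} [EMetricSpace X] [MeasurableSpace X]
    (μ : Measure X) : ℝ≥0∞ :=
  ⨅ (s : Set X) (_ : 0 < μ s), dimH s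

namespace ExDim

def B (n : ℕ) : Set ℝ := Set.Ioo ((10 : ℝ) ^ n) (3 * 10 ^ n)

def U : Set ℝ := ⋃ n, B n

def lam : Bool → ℝ
  | true => 1 / 20
  | false => 5

def nxt : Bool → ℕ → ℕ
  | true, n => n - 1
  | false, n => n + 1

structure Sys (h : Bool → ℝ → ℝ) (p : Bool → ℝ) (ν : Measure ℝ) : Prop where
  maps : ∀ i n x, x ∈ B n → h i x ∈ B (nxt i n)
  aff : ∀ i n, ∃ α, ∀ x ∈ B n, h i x = lam i * x + α
  inj : ∀ i j x y, x ∈ U → y ∈ U → h i x = h j y → i = j ∧ x = y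
  ppos : ∀ i, 0 < p i
  psum : ∑ i, p i = 1
  nuU : ν Uᶜ = 0
  inv : ∀ A, ν A = ∑ i, ENNReal.ofReal (p i) * ν (h i ⁻¹' A)

lemma lam_pos (i : Bool) : 0 < lam i := by cases i <;> norm_num [lam]

lemma B_unique {m n : ℕ} {x : ℝ} (hm : x ∈ B m) (hn : x ∈ B n) : m = n := by
  have key : ∀ {a b : ℕ}, x ∈ B a → x ∈ B b → ¬ a < b := by
    intro a b ha hb hab
    have h1 : (10 : ℝ) ^ (a + 1) ≤ 10 ^ b := pow_le_pow_right₀ (by norm_num) hab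
    rw [pow_succ] at h1
    have h2 := ha.2
    have h3 := hb.1
    have : (0 : ℝ) < 10 ^ a := by positivity
    linarith
  exact le_antisymm (not_lt.1 (key hn hm)) (not_lt.1 (key hm hn))

lemma B_sub_U (n : ℕ) : B n ⊆ U := Set.subset_iUnion B n

lemma lam_le (i : Bool) (n : ℕ) : lam i * (2 * 10 ^ n) ≤ (2 * 10 ^ (nxt i n)) / 2 := by
  cases i
  · simp only [lam, nxt, pow_succ]; linarith
  · rcases n with _ | n
    · norm_num [lam, nxt]
    · simp only [lam, nxt, pow_succ, Nat.add_sub_cancel]; linarith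

lemma le_lam (i : Bool) (n : ℕ) : (2 * 10 ^ (nxt i n)) / 20 ≤ lam i * (2 * 10 ^ n) := by
  have : (0 : ℝ) < 10 ^ n := by positivity
  cases i
  · simp only [lam, nxt, pow_succ]; linarith
  · rcases n with _ | n
    · norm_num [lam, nxt]
    · have : (0 : ℝ) < 10 ^ n := by positivity
      simp only [lam, nxt, pow_succ, Nat.add_sub_cancel]; linarith

def Hw (h : Bool → ℝ → ℝ) : ∀ k, (Fin k → Bool) → ℝ → ℝ
  | 0, _ => id
  | k + 1, w => fun x => h (w 0) (Hw h k (Fin.tail w) x)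

def C (h : Bool → ℝ → ℝ) (k : ℕ) (w : Fin k → Bool) (n : ℕ) : Set ℝ := Hw h k w '' B n

/-- product of weights along a word -/
def pw (p : Bool → ℝ) (k : ℕ) (w : Fin k → Bool) : ℝ := ∏ i, p (w i)

lemma pw_succ (p : Bool → ℝ) (k : ℕ) (w : Fin (k + 1) → Bool) :
    pw p (k + 1) w = p (w 0) * pw p k (Fin.tail w) := by
  simp [pw, Fin.prod_univ_succ, Fin.tail]

lemma pw_pos {p : Bool → ℝ} (hp : ∀ i, 0 < p i) (k : ℕ) (w : Fin k → Bool) : 0 < pw p k w :=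
  Finset.prod_pos fun _ _ => hp _

lemma sum_pw (p : Bool → ℝ) (k : ℕ) : ∑ w : Fin k → Bool, pw p k w = (∑ i, p i) ^ k := by
  simp only [pw]
  rw [Fintype.sum_pow]

variable {h : Bool → ℝ → ℝ} {p : Bool → ℝ} {ν : Measure ℝ}

lemma Hw_maps (S : Sys h p ν) : ∀ k (w : Fin k → Bool) (n : ℕ), ∃ m, ∀ x ∈ B n, Hw h k w x ∈ B m := by
  intro k
  induction k with
  | zero => intro w n; exact ⟨n, fun x hx => hx⟩
  | succ k ih =>
    intro w n
    obtain ⟨m, hm⟩ := ih (Fin.tail w) n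
    exact ⟨nxt (w 0) m, fun x hx => S.maps _ _ _ (hm x hx)⟩

lemma Hw_U (S : Sys h p ν) (k) (w : Fin k → Bool) {x : ℝ} (hx : x ∈ U) : Hw h k w x ∈ U := by
  obtain ⟨n, hn⟩ := Set.mem_iUnion.1 hx
  obtain ⟨m, hm⟩ := Hw_maps S k w n
  exact B_sub_U m (hm x hn)

lemma Hw_aff (S : Sys h p ν) : ∀ k (w : Fin k → Bool) (n : ℕ),
    ∃ α, ∀ x ∈ B n, Hw h k w x = pw lam k w * x + α := by
  intro k
  induction k with
  | zero => intro w n; exact ⟨0, fun x hx => by simp [Hw, pw]⟩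
  | succ k ih =>
    intro w n
    obtain ⟨m, hm⟩ := Hw_maps S k (Fin.tail w) n
    obtain ⟨α, hα⟩ := ih (Fin.tail w) n
    obtain ⟨β, hβ⟩ := S.aff (w 0) m
    refine ⟨lam (w 0) * α + β, fun x hx => ?_⟩
    show h (w 0) (Hw h k (Fin.tail w) x) = _
    rw [pw_succ, hβ _ (hm x hx), hα x hx]
    ring

lemma C_eq (S : Sys h p ν) (k) (w : Fin k → Bool) (n : ℕ) :
    ∃ u v, C h k w n = Set.Ioo u v ∧ v - u = pw lam k w * (2 * 10 ^ n) := by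
  obtain ⟨α, hα⟩ := Hw_aff S k w n
  have hp := pw_pos lam_pos k w
  refine ⟨pw lam k w * 10 ^ n + α, pw lam k w * (3 * 10 ^ n) + α, ?_, by ring⟩
  ext y
  constructor
  · rintro ⟨x, hx, rfl⟩
    rw [hα x hx]
    exact ⟨by have := mul_lt_mul_of_pos_left hx.1 hp; linarith,
      by have := mul_lt_mul_of_pos_left hx.2 hp; linarith⟩
  · rintro ⟨h1, h2⟩
    have hx : (y - α) / pw lam k w ∈ B n :=
      ⟨by rw [lt_div_iff₀ hp]; linarith, by rw [div_lt_iff₀ hp]; linarith⟩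
    refine ⟨_, hx, ?_⟩
    rw [hα _ hx]
    field_simp
    ring

lemma C_sub_U (S : Sys h p ν) (k) (w : Fin k → Bool) (n : ℕ) : C h k w n ⊆ U := by
  rintro _ ⟨x, hx, rfl⟩
  exact Hw_U S k w (B_sub_U n hx)

lemma C_meas (S : Sys h p ν) (k) (w : Fin k → Bool) (n : ℕ) : MeasurableSet (C h k w n) := by
  obtain ⟨u, v, e, -⟩ := C_eq S k w n
  rw [e]; exact measurableSet_Ioo

lemma Hw_inj (S : Sys h p ν) : ∀ k (w w' : Fin k → Bool) (x y : ℝ), x ∈ U → y ∈ U →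
    Hw h k w x = Hw h k w' y → w = w' ∧ x = y := by
  intro k
  induction k with
  | zero => intro w w' x y _ _ e; exact ⟨Subsingleton.elim _ _, e⟩
  | succ k ih =>
    intro w w' x y hx hy e
    obtain ⟨e0, e1⟩ := S.inj _ _ _ _ (Hw_U S k _ hx) (Hw_U S k _ hy) e
    obtain ⟨e2, e3⟩ := ih _ _ _ _ hx hy e1
    refine ⟨?_, e3⟩
    rw [← Fin.cons_self_tail w, ← Fin.cons_self_tail w', e0, e2]

lemma C_unique (S : Sys h p ν) {k} {w w' : Fin k → Bool} {n n' : ℕ} {x : ℝ}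
    (h1 : x ∈ C h k w n) (h2 : x ∈ C h k w' n') : w = w' ∧ n = n' := by
  obtain ⟨y, hy, rfl⟩ := h1
  obtain ⟨z, hz, e⟩ := h2
  obtain ⟨e1, rfl⟩ := Hw_inj S k _ _ _ _ (B_sub_U _ hz) (B_sub_U _ hy) e
  exact ⟨e1.symm, B_unique hy hz⟩

lemma nu_image (S : Sys h p ν) (i : Bool) {A : Set ℝ} (hA : A ⊆ U) :
    ν (h i '' A) = ENNReal.ofReal (p i) * ν A := by
  rw [S.inv, Finset.sum_eq_single i]
  · congr 1
    apply le_antisymm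
    · calc ν (h i ⁻¹' (h i '' A)) ≤ ν (A ∪ Uᶜ) := by
            apply measure_mono
            rintro x ⟨y, hy, e⟩
            by_cases hx : x ∈ U
            · left
              rw [← (S.inj _ _ _ _ (hA hy) hx e).2]; exact hy
            · exact Or.inr hx
        _ ≤ ν A + ν Uᶜ := measure_union_le _ _
        _ = ν A := by rw [S.nuU, add_zero]
    · exact measure_mono (Set.subset_preimage_image _ _)
  · intro j _ hj
    have : ν (h j ⁻¹' (h i '' A)) = 0 := by
      refine measure_mono_null ?_ S.nuU
      rintro x ⟨y, hy, e⟩ hx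
      exact hj (S.inj _ _ _ _ (hA hy) hx e).1.symm
    rw [this, mul_zero]
  · simp

lemma nu_Hw (S : Sys h p ν) : ∀ k (w : Fin k → Bool) {A : Set ℝ}, A ⊆ U →
    ν (Hw h k w '' A) = ENNReal.ofReal (pw p k w) * ν A := by
  intro k
  induction k with
  | zero => intro w A _; simp [Hw, pw]
  | succ k ih =>
    intro w A hA
    have : Hw h (k + 1) w '' A = h (w 0) '' (Hw h k (Fin.tail w) '' A) := by
      rw [Set.image_image]; rfl
    rw [this, nu_image S, ih _ hA, pw_succ, ENNReal.ofReal_mul (S.ppos _).le, mul_assoc]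
    rintro _ ⟨x, hx, rfl⟩
    exact Hw_U S _ _ (hA hx)

/-- points coded up to level k -/
def X (h : Bool → ℝ → ℝ) (k : ℕ) : Set ℝ := ⋃ (w : Fin k → Bool) (n : ℕ), C h k w n

lemma X_meas (S : Sys h p ν) (k) : MeasurableSet (X h k) :=
  MeasurableSet.iUnion fun w => MeasurableSet.iUnion fun n => C_meas S k w n

lemma nu_X (S : Sys h p ν) (k) : ν (X h k)ᶜ = 0 := by
  induction k with
  | zero =>
    refine measure_mono_null ?_ S.nuU
    rw [Set.compl_subset_compl]
    intro x hx
    obtain ⟨n, hn⟩ := Set.mem_iUnion.1 hx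
    exact Set.mem_iUnion₂.2 ⟨Fin.elim0, n, x, hn, rfl⟩
  | succ k ih =>
    rw [S.inv]
    refine Finset.sum_eq_zero fun i _ => ?_
    rw [measure_mono_null _ ih, mul_zero]
    rw [← Set.preimage_compl.symm, Set.compl_subset_compl]
    intro x hx
    obtain ⟨w, n, y, hy, rfl⟩ := Set.mem_iUnion₂.1 hx
    refine Set.mem_iUnion₂.2 ⟨Fin.cons i w, n, y, hy, ?_⟩
    simp [Hw]

lemma C_small (S : Sys h p ν) : ∀ k (w : Fin k → Bool) (n m : ℕ) (x : ℝ), x ∈ C h k w n → x ∈ B m →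
    pw lam k w * (2 * 10 ^ n) ≤ (2 * 10 ^ m) * (1 / 2) ^ k := by
  intro k
  induction k with
  | zero =>
    rintro w n m _ ⟨x, hx, rfl⟩ hm
    rw [B_unique (show x ∈ B m from hm) hx]
    simp [pw]
  | succ k ih =>
    rintro w n m _ ⟨x, hx, rfl⟩ hm
    obtain ⟨m', hm'⟩ := Hw_maps S k (Fin.tail w) n
    have e : m = nxt (w 0) m' := B_unique hm (S.maps _ _ _ (hm' x hx))
    have h1 := ih (Fin.tail w) n m' _ ⟨x, hx, rfl⟩ (hm' x hx)
    have h2 := lam_le (w 0) m'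
    rw [← e] at h2
    rw [pw_succ, pow_succ]
    calc lam (w 0) * pw lam k (Fin.tail w) * (2 * 10 ^ n)
        = lam (w 0) * (pw lam k (Fin.tail w) * (2 * 10 ^ n)) := by ring
      _ ≤ lam (w 0) * ((2 * 10 ^ m') * (1 / 2) ^ k) :=
          mul_le_mul_of_nonneg_left h1 (lam_pos _).le
      _ = lam (w 0) * (2 * 10 ^ m') * (1 / 2) ^ k := by ring
      _ ≤ (2 * 10 ^ m) / 2 * (1 / 2) ^ k := by gcongr
      _ = _ := by ring

lemma C_exists (S : Sys h p ν) : ∀ k (w : Fin k → Bool) (n m : ℕ) (x r : ℝ), x ∈ C h k w n →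
    x ∈ B m → pw lam k w * (2 * 10 ^ n) < r → r ≤ 2 * 10 ^ m →
    ∃ k' w' n', x ∈ C h k' w' n' ∧ r / 20 ≤ pw lam k' w' * (2 * 10 ^ n') ∧
      pw lam k' w' * (2 * 10 ^ n') < r := by
  intro k
  induction k with
  | zero =>
    rintro w n m _ r ⟨x, hx, rfl⟩ hm h1 h2
    rw [B_unique (show x ∈ B m from hm) hx] at h2
    simp only [pw, Finset.univ_eq_empty, Finset.prod_empty, one_mul] at h1
    linarith
  | succ k ih =>
    rintro w n m _ r ⟨x, hx, rfl⟩ hm h1 h2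
    obtain ⟨m', hm'⟩ := Hw_maps S k (Fin.tail w) n
    have e : m = nxt (w 0) m' := B_unique hm (S.maps _ _ _ (hm' x hx))
    have hl := lam_pos (w 0)
    by_cases hc : r / lam (w 0) ≤ 2 * 10 ^ m'
    · obtain ⟨k', w', n', ⟨y, hy, ey⟩, g1, g2⟩ := ih (Fin.tail w) n m' _ (r / lam (w 0))
        ⟨x, hx, rfl⟩ (hm' x hx) (by rw [lt_div_iff₀ hl]; rw [pw_succ] at h1; linarith) hc
      refine ⟨k' + 1, Fin.cons (w 0) w', n', ⟨y, hy, ?_⟩, ?_, ?_⟩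
      · simp [Hw, ey]
      · rw [pw_succ]
        simp only [Fin.cons_zero, Fin.tail_cons]
        rw [div_right_comm, div_le_iff₀ hl] at g1
        linarith
      · rw [pw_succ]
        simp only [Fin.cons_zero, Fin.tail_cons]
        rw [lt_div_iff₀ hl] at g2
        linarith
    · refine ⟨1, fun _ => w 0, m', ⟨_, hm' x hx, ?_⟩, ?_, ?_⟩
      · simp [Hw]
      · have := le_lam (w 0) m'
        rw [← e] at this
        simp only [pw, Finset.univ_unique, Finset.prod_const, Finset.card_singleton, pow_one]
        linarith
      · rw [not_le, lt_div_iff₀ hl] at hc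
        simp only [pw, Finset.univ_unique, Finset.prod_const, Finset.card_singleton, pow_one]
        linarith


lemma exists_gamma {p a : Bool → ℝ} (psum : ∑ i, p i = 1)
    (apos : ∀ i, 0 < a i) (hs : ∑ i, p i * Real.log (a i) < 0) :
    ∃ γ t : ℝ, 0 < γ ∧ γ < 1 ∧ 0 < t ∧ ∑ i, p i * (a i / γ) ^ t < 1 := by
  set δ : ℝ := -(∑ i, p i * Real.log (a i)) / 2 with hδ
  have hδ0 : 0 < δ := by rw [hδ]; linarith
  set d : Bool → ℝ := fun i => Real.log (a i) + δ with hd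
  set f : ℝ → ℝ := fun t => ∑ i, p i * Real.exp (t * d i) with hf
  have hder : HasDerivAt f (∑ i, p i * d i) 0 := by
    apply HasDerivAt.fun_sum
    intro i _
    have h1 : HasDerivAt (fun t : ℝ => t * d i) (1 * d i) 0 := (hasDerivAt_id (0 : ℝ)).mul_const _
    have h2 := (h1.exp).const_mul (p i)
    simpa using h2
  have hneg : ∑ i, p i * d i < 0 := by
    have : ∑ i, p i * d i = ∑ i, p i * Real.log (a i) + (∑ i, p i) * δ := by
      rw [Finset.sum_mul, ← Finset.sum_add_distrib]
      exact Finset.sum_congr rfl fun i _ => by rw [hd]; ring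
    rw [this, psum]; linarith
  have f0 : f 0 = 1 := by rw [← psum]; simp [hf]
  have hev := (hasDerivAt_iff_tendsto_slope.1 hder).eventually (gt_mem_nhds hneg)
  have hev2 : ∀ᶠ t in nhdsWithin (0 : ℝ) (Set.Ioi 0), slope f 0 t < 0 :=
    hev.filter_mono (nhdsWithin_mono _ fun x hx => ne_of_gt hx)
  obtain ⟨t, ht, ht0⟩ := (hev2.and self_mem_nhdsWithin).exists
  refine ⟨Real.exp (-δ), t, Real.exp_pos _, by rw [Real.exp_lt_one_iff]; linarith, ht0, ?_⟩
  have ht0' : 0 < t := ht0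
  have e : ∑ i, p i * (a i / Real.exp (-δ)) ^ t = f t := by
    refine Finset.sum_congr rfl fun i _ => ?_
    rw [Real.rpow_def_of_pos (div_pos (apos i) (Real.exp_pos _)),
      Real.log_div (apos i).ne' (Real.exp_pos _).ne', Real.log_exp, hd]
    ring_nf
  rw [e]
  rw [slope_def_field, f0, sub_zero, div_neg_iff] at ht
  rcases ht with ht | ht <;> linarith [ht.1, ht.2]

lemma chernoff {p g : Bool → ℝ} (ppos : ∀ i, 0 < p i) (gpos : ∀ i, 0 < g i) {t c : ℝ}
    (ht : 0 < t) (hc : 0 < c) (k : ℕ) :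
    ∑ w : Fin k → Bool with c < pw g k w, pw p k w ≤
      (c ^ t)⁻¹ * (∑ i, p i * g i ^ t) ^ k := by
  have e : ∀ w : Fin k → Bool, pw (fun i => p i * g i ^ t) k w = pw p k w * pw g k w ^ t := by
    intro w
    simp only [pw]
    rw [Finset.prod_mul_distrib, Real.finsetProd_rpow _ _ fun i _ => (gpos _).le]
  rw [← sum_pw, Finset.mul_sum]
  calc ∑ w : Fin k → Bool with c < pw g k w, pw p k w
      ≤ ∑ w : Fin k → Bool with c < pw g k w, (c ^ t)⁻¹ * pw (fun i => p i * g i ^ t) k w := by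
        refine Finset.sum_le_sum fun w hw => ?_
        have hw' := (Finset.mem_filter.1 hw).2
        rw [e, inv_mul_eq_div, le_div_iff₀ (Real.rpow_pos_of_pos hc _)]
        exact mul_le_mul_of_nonneg_left (Real.rpow_le_rpow hc.le hw'.le ht.le)
          (pw_pos ppos _ _).le
    _ ≤ _ := by
        refine Finset.sum_le_sum_of_subset_of_nonneg (Finset.filter_subset _ _) fun w _ _ => ?_
        rw [e]
        have := pw_pos ppos k w
        have := pw_pos gpos k w
        positivity

/-- The points whose level `k` word is bad. -/
def bad (h : Bool → ℝ → ℝ) (g : Bool → ℝ) (c : ℝ) (k : ℕ) : Set ℝ :=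
  ⋃ w ∈ Finset.univ.filter (fun w : Fin k → Bool => c < pw g k w), ⋃ n : ℕ, C h k w n

lemma bad_meas (S : Sys h p ν) (g : Bool → ℝ) (c : ℝ) (k : ℕ) : MeasurableSet (bad h g c k) :=
  Finset.measurableSet_biUnion _ fun w _ => MeasurableSet.iUnion fun n => C_meas S k w n

lemma C_iUnion (k) (w : Fin k → Bool) : ⋃ n, C h k w n = Hw h k w '' U := by
  simp only [C, U, Set.image_iUnion]

lemma nu_bad [IsProbabilityMeasure ν] (S : Sys h p ν) {g : Bool → ℝ} (gpos : ∀ i, 0 < g i)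
    {t c : ℝ} (ht : 0 < t) (hc : 0 < c) (k : ℕ) :
    ν (bad h g c k) ≤ ENNReal.ofReal ((c ^ t)⁻¹ * (∑ i, p i * g i ^ t) ^ k) := by
  calc ν (bad h g c k)
      ≤ ∑ w : Fin k → Bool with c < pw g k w, ν (⋃ n : ℕ, C h k w n) :=
        measure_biUnion_finset_le _ _
    _ ≤ ∑ w : Fin k → Bool with c < pw g k w, ENNReal.ofReal (pw p k w) := by
        refine Finset.sum_le_sum fun w _ => ?_
        rw [C_iUnion, nu_Hw S k w subset_rfl]
        calc _ ≤ ENNReal.ofReal (pw p k w) * 1 := by gcongr; exact prob_le_one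
          _ = _ := mul_one _
    _ = ENNReal.ofReal (∑ w : Fin k → Bool with c < pw g k w, pw p k w) :=
        (ENNReal.ofReal_sum_of_nonneg fun w _ => (pw_pos S.ppos _ _).le).symm
    _ ≤ _ := ENNReal.ofReal_le_ofReal (chernoff S.ppos gpos ht hc k)

lemma pw_quot {a b : Bool → ℝ} (γ : ℝ) (k : ℕ) (w : Fin k → Bool) :
    pw (fun i => a i / b i / γ) k w = pw a k w / pw b k w / γ ^ k := by
  simp [pw, Finset.prod_div_distrib]

lemma pw_rpow {a : Bool → ℝ} (ha : ∀ i, 0 < a i) (s : ℝ) (k : ℕ) (w : Fin k → Bool) :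
    pw (fun i => a i ^ s) k w = pw a k w ^ s := by
  simp only [pw]
  rw [Real.finsetProd_rpow _ _ fun i _ => (ha _).le]

lemma pw_le_one (S : Sys h p ν) (k : ℕ) (w : Fin k → Bool) : pw p k w ≤ 1 := by
  refine Finset.prod_le_one (fun i _ => (S.ppos _).le) fun i _ => ?_
  rw [← S.psum]
  exact Finset.single_le_sum (f := p) (fun i _ => (S.ppos i).le) (Finset.mem_univ _)

lemma sum_ofReal_pw (S : Sys h p ν) (k : ℕ) :
    ∑ w : Fin k → Bool, ENNReal.ofReal (pw p k w) = 1 := by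
  rw [← ENNReal.ofReal_sum_of_nonneg fun w _ => (pw_pos S.ppos _ _).le, sum_pw, S.psum]
  simp

/-- points coded well at level k with bounded index -/
def G (h : Bool → ℝ → ℝ) (g : Bool → ℝ) (M k : ℕ) : Set ℝ :=
  ⋃ (w : Fin k → Bool) (_ : pw g k w ≤ 1) (n : Fin (M + 1)), C h k w n

def L (h : Bool → ℝ → ℝ) (g : Bool → ℝ) (M : ℕ) : Set ℝ := ⋂ K, ⋃ k ≥ K, G h g M k

def tail (M : ℕ) : Set ℝ := ⋃ n > M, B n

lemma tail_sub (M : ℕ) : tail M ⊆ U := Set.iUnion₂_subset fun n _ => B_sub_U n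

lemma nu_G [IsProbabilityMeasure ν] (S : Sys h p ν) {g : Bool → ℝ} (gpos : ∀ i, 0 < g i)
    {t : ℝ} (ht : 0 < t) (M k : ℕ) :
    ν (G h g M k)ᶜ ≤ ν (tail M) + ENNReal.ofReal (∑ i, p i * g i ^ t) ^ k := by
  have hsub : (G h g M k)ᶜ ⊆ ((X h k)ᶜ ∪ bad h g 1 k) ∪ ⋃ w : Fin k → Bool, Hw h k w '' tail M := by
    intro x hx
    by_cases hX : x ∈ X h k
    · obtain ⟨w, n, hw⟩ := Set.mem_iUnion₂.1 hX
      by_cases hb : pw g k w ≤ 1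
      · right
        by_cases hn : n < M + 1
        · exact absurd (Set.mem_iUnion₂.2 ⟨w, hb, Set.mem_iUnion.2 ⟨⟨n, hn⟩, hw⟩⟩) hx
        · refine Set.mem_iUnion.2 ⟨w, ?_⟩
          obtain ⟨y, hy, rfl⟩ := hw
          exact ⟨y, Set.mem_iUnion₂.2 ⟨n, by omega, hy⟩, rfl⟩
      · left; right
        exact Set.mem_iUnion₂.2 ⟨w, by simpa using hb, Set.mem_iUnion.2 ⟨n, hw⟩⟩
    · exact Or.inl (Or.inl hX)
  have h1 : ν (⋃ w : Fin k → Bool, Hw h k w '' tail M) ≤ ν (tail M) := by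
    calc _ ≤ ∑ w : Fin k → Bool, ν (Hw h k w '' tail M) := measure_iUnion_fintype_le _ _
      _ = ∑ w : Fin k → Bool, ENNReal.ofReal (pw p k w) * ν (tail M) :=
          Finset.sum_congr rfl fun w _ => nu_Hw S k w (tail_sub M)
      _ = ν (tail M) := by rw [← Finset.sum_mul, sum_ofReal_pw S, one_mul]
  have h2 := nu_bad S gpos ht one_pos k
  rw [Real.one_rpow, inv_one, one_mul, ENNReal.ofReal_pow] at h2
  · calc ν (G h g M k)ᶜ ≤ _ := measure_mono hsub
      _ ≤ (ν (X h k)ᶜ + ν (bad h g 1 k)) + ν (⋃ w : Fin k → Bool, Hw h k w '' tail M) :=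
          (measure_union_le _ _).trans (by gcongr; exact measure_union_le _ _)
      _ ≤ (0 + ENNReal.ofReal (∑ i, p i * g i ^ t) ^ k) + ν (tail M) := by
          rw [nu_X S]; gcongr
      _ = _ := by rw [zero_add, add_comm]
  · exact Finset.sum_nonneg fun i _ => mul_nonneg (S.ppos i).le (Real.rpow_nonneg (gpos i).le _)

lemma nu_L [IsProbabilityMeasure ν] (S : Sys h p ν) {g : Bool → ℝ} (gpos : ∀ i, 0 < g i)
    {t : ℝ} (ht : 0 < t) (hρ : ∑ i, p i * g i ^ t < 1) (M : ℕ) :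
    ν (L h g M)ᶜ ≤ ν (tail M) := by
  have e : (L h g M)ᶜ = ⋃ K, ⋂ k ≥ K, (G h g M k)ᶜ := by simp [L]
  rw [e, Monotone.measure_iUnion]
  · refine iSup_le fun K => ?_
    have hle : ∀ k ≥ K, ν (⋂ k ≥ K, (G h g M k)ᶜ) ≤
        ν (tail M) + ENNReal.ofReal (∑ i, p i * g i ^ t) ^ k := fun k hk =>
      (measure_mono (Set.iInter₂_subset k hk)).trans (nu_G S gpos ht M k)
    have hlim : Tendsto (fun k => ν (tail M) + ENNReal.ofReal (∑ i, p i * g i ^ t) ^ k) atTop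
        (nhds (ν (tail M) + 0)) := by
      refine Tendsto.const_add _ ?_
      apply ENNReal.tendsto_pow_atTop_nhds_zero_of_lt_one
      simpa using hρ
    rw [add_zero] at hlim
    exact ge_of_tendsto hlim (eventually_atTop.2 ⟨K, hle⟩)
  · intro a b hab
    exact Set.iInter₂_mono' fun k hk => ⟨k, le_trans hab hk, subset_rfl⟩

lemma tail_tendsto [IsProbabilityMeasure ν] : Tendsto (fun M => ν (tail M)) atTop (nhds 0) := by
  have hA : Antitone tail := fun a b hab =>
    Set.iUnion₂_mono' fun n hn => ⟨n, lt_of_le_of_lt hab hn, subset_rfl⟩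
  have h1 := tendsto_measure_iInter_atTop (μ := ν) (s := tail)
    (fun M => (MeasurableSet.iUnion fun n => MeasurableSet.iUnion fun _ =>
      measurableSet_Ioo).nullMeasurableSet) hA ⟨0, measure_ne_top _ _⟩
  have h2 : ⋂ M, tail M = ∅ := by
    rw [Set.eq_empty_iff_forall_notMem]
    intro x hx
    rw [Set.mem_iInter] at hx
    obtain ⟨n, hn, hxn⟩ := Set.mem_iUnion₂.1 (hx 0)
    obtain ⟨m, hm, hxm⟩ := Set.mem_iUnion₂.1 (hx n)
    have := B_unique hxn hxm
    omega
  rwa [h2, measure_empty] at h1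

lemma C_ediam (S : Sys h p ν) (k) (w : Fin k → Bool) (n : ℕ) :
    ediam (C h k w n) = ENNReal.ofReal (pw lam k w * (2 * 10 ^ n)) := by
  obtain ⟨u, v, e, e'⟩ := C_eq S k w n
  rw [e, Real.ediam_Ioo, e']

lemma dimH_L (S : Sys h p ν) (s : ℝ≥0) (hs : 0 < s) {γ : ℝ}
    (hγ0 : 0 < γ) (hγ1 : γ < 1) (M : ℕ) :
    dimH (L h (fun i => lam i ^ (s : ℝ) / p i / γ) M) ≤ s := by
  set g : Bool → ℝ := fun i => lam i ^ (s : ℝ) / p i / γ with hg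
  have hs' : (0 : ℝ) < s := hs
  have good : ∀ k (w : Fin k → Bool), pw g k w ≤ 1 → pw lam k w ^ (s : ℝ) ≤ pw p k w * γ ^ k := by
    intro k w hw
    rw [hg, pw_quot, pw_rpow lam_pos, div_le_one (by positivity), div_le_iff₀ (pw_pos S.ppos _ _)] at hw
    linarith
  set γ' : ℝ := γ ^ (1 / (s : ℝ)) with hγ'
  have hγ'0 : 0 ≤ γ' := Real.rpow_nonneg hγ0.le _
  have hγ'1 : γ' < 1 := Real.rpow_lt_one hγ0.le hγ1 (by positivity)
  have small : ∀ k (w : Fin k → Bool), pw g k w ≤ 1 → pw lam k w ≤ γ' ^ k := by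
    intro k w hw
    have h1 : pw lam k w ^ (s : ℝ) ≤ γ ^ k := (good k w hw).trans
      (mul_le_of_le_one_left (by positivity) (pw_le_one S k w))
    have h2 : (γ' ^ k) ^ (s : ℝ) = γ ^ k := by
      rw [← Real.rpow_natCast, hγ', ← Real.rpow_mul hγ0.le, ← Real.rpow_mul hγ0.le,
        ← Real.rpow_natCast]
      congr 1
      field_simp
    rw [← h2] at h1
    exact (Real.rpow_le_rpow_iff (pw_pos lam_pos _ _).le (by positivity) hs').1 h1
  apply dimH_le_of_hausdorffMeasure_ne_top
  classical
  let ι := Σ k : ℕ, (Fin k → Bool) × Fin (M + 1)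
  let tt : ℕ → ι → Set ℝ := fun K i =>
    if K ≤ i.1 ∧ pw g i.1 i.2.1 ≤ 1 then C h i.1 i.2.1 i.2.2 else ∅
  have hpow : ∀ n : Fin (M + 1), (10 : ℝ) ^ (n : ℕ) ≤ 10 ^ M := fun n =>
    pow_le_pow_right₀ (by norm_num) (by omega)
  have hmain : Measure.hausdorffMeasure (s : ℝ) (L h g M) ≤
      liminf (fun K => ∑' i, ediam (tt K i) ^ (s : ℝ)) atTop := by
    apply Measure.hausdorffMeasure_le_liminf_tsum (s : ℝ) (L h g M)
      (fun K => ENNReal.ofReal (γ' ^ K * (2 * 10 ^ M)))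
    · rw [← ENNReal.ofReal_zero]
      apply ENNReal.tendsto_ofReal
      simpa using (tendsto_pow_atTop_nhds_zero_of_lt_one hγ'0 hγ'1).mul_const (2 * (10 : ℝ) ^ M)
    · refine Eventually.of_forall fun K i => ?_
      simp only [tt]
      split_ifs with hi
      · rw [C_ediam S]
        apply ENNReal.ofReal_le_ofReal
        have h1 := small _ _ hi.2
        have h2 : γ' ^ i.1 ≤ γ' ^ K := pow_le_pow_of_le_one hγ'0 hγ'1.le hi.1
        have h3 := hpow i.2.2
        exact mul_le_mul (h1.trans h2) (by linarith) (by positivity) (by positivity)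
      · simp
    · refine Eventually.of_forall fun K x hx => ?_
      obtain ⟨k, hk, hx2⟩ := Set.mem_iUnion₂.1 (Set.mem_iInter.1 hx K)
      obtain ⟨w, hw, hx3⟩ := Set.mem_iUnion₂.1 hx2
      obtain ⟨n, hn⟩ := Set.mem_iUnion.1 hx3
      refine Set.mem_iUnion.2 ⟨⟨k, w, n⟩, ?_⟩
      simp only [tt]
      rw [if_pos ⟨hk, hw⟩]
      exact hn
  set D : ℝ := (2 * 10 ^ M) ^ (s : ℝ) with hD
  have hD0 : 0 ≤ D := Real.rpow_nonneg (by positivity) _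
  have hterm : ∀ K (i : ι), ediam (tt K i) ^ (s : ℝ) ≤
      ENNReal.ofReal (pw p i.1 i.2.1) * ENNReal.ofReal (D * γ ^ i.1) := by
    intro K i
    simp only [tt]
    split_ifs with hi
    · rw [C_ediam S, ENNReal.ofReal_rpow_of_nonneg
        (mul_nonneg (pw_pos lam_pos _ _).le (by positivity)) hs'.le,
        ← ENNReal.ofReal_mul (pw_pos S.ppos _ _).le]
      apply ENNReal.ofReal_le_ofReal
      rw [Real.mul_rpow (pw_pos lam_pos _ _).le (by positivity)]
      calc _ ≤ (pw p i.1 i.2.1 * γ ^ i.1) * D := by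
            apply mul_le_mul (good _ _ hi.2) _ (Real.rpow_nonneg (by positivity) _)
            · exact mul_nonneg (pw_pos S.ppos _ _).le (by positivity)
            · exact Real.rpow_le_rpow (by positivity) (by linarith [hpow i.2.2]) hs'.le
        _ = _ := by ring
    · rw [ediam_empty, ENNReal.zero_rpow_of_pos hs']; exact zero_le
  have hsum : ∀ K, ∑' i, ediam (tt K i) ^ (s : ℝ) ≤
      ((M + 1 : ℕ) : ℝ≥0∞) * ENNReal.ofReal (D * (1 - γ)⁻¹) := by
    intro K
    calc ∑' i, ediam (tt K i) ^ (s : ℝ)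
        ≤ ∑' i : ι, ENNReal.ofReal (pw p i.1 i.2.1) * ENNReal.ofReal (D * γ ^ i.1) :=
          ENNReal.tsum_le_tsum (hterm K)
      _ = ∑' k : ℕ, ((M + 1 : ℕ) : ℝ≥0∞) * ENNReal.ofReal (D * γ ^ k) := by
          rw [ENNReal.tsum_sigma']
          congr 1
          ext k
          rw [tsum_fintype, Fintype.sum_prod_type]
          simp only [Finset.sum_const, Finset.card_univ, Fintype.card_fin]
          rw [← Finset.smul_sum, ← Finset.sum_mul, sum_ofReal_pw S, one_mul, nsmul_eq_mul]
      _ = _ := by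
          rw [ENNReal.tsum_mul_left, ← ENNReal.ofReal_tsum_of_nonneg,
            ((hasSum_geometric_of_lt_one hγ0.le hγ1).mul_left D).tsum_eq]
          · intro k; positivity
          · exact (summable_geometric_of_lt_one hγ0.le hγ1).mul_left D
  have hlim : liminf (fun K => ∑' i, ediam (tt K i) ^ (s : ℝ)) atTop ≤
      ((M + 1 : ℕ) : ℝ≥0∞) * ENNReal.ofReal (D * (1 - γ)⁻¹) :=
    liminf_le_of_frequently_le' (Eventually.of_forall hsum).frequently
  refine ne_top_of_le_ne_top ?_ (hmain.trans hlim)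
  exact ENNReal.mul_ne_top (ENNReal.natCast_ne_top _) ENNReal.ofReal_ne_top

theorem upper [IsProbabilityMeasure ν] (S : Sys h p ν) (s : ℝ≥0) (hs : 0 < s)
    (hneg : ∑ i, p i * Real.log (lam i ^ (s : ℝ) / p i) < 0) : upperDimH ν ≤ s := by
  have apos : ∀ i, 0 < lam i ^ (s : ℝ) / p i := fun i =>
    div_pos (Real.rpow_pos_of_pos (lam_pos i) _) (S.ppos i)
  obtain ⟨γ, t, hγ0, hγ1, ht, hρ⟩ := exists_gamma S.psum apos hneg
  have hfull : ν (⋃ M, L h (fun i => lam i ^ (s : ℝ) / p i / γ) M)ᶜ = 0 := by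
    rw [← nonpos_iff_eq_zero]
    refine ge_of_tendsto (tail_tendsto (ν := ν)) (Eventually.of_forall fun M => ?_)
    refine le_trans (measure_mono ?_) (nu_L S (fun i => div_pos (apos i) hγ0) ht hρ M)
    exact Set.compl_subset_compl.2 (Set.subset_iUnion _ M)
  unfold upperDimH
  refine (iInf₂_le (⋃ M, L h (fun i => lam i ^ (s : ℝ) / p i / γ) M) hfull).trans ?_
  rw [dimH_iUnion]
  exact iSup_le fun M => dimH_L S s hs hγ0 hγ1 M

lemma nu_E [IsProbabilityMeasure ν] (S : Sys h p ν) (s : ℝ≥0) {γ c r : ℝ}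
    (hγ0 : 0 < γ) (hc : 0 < c) (hr : 0 < r) (q : ℝ) (k : ℕ) :
    ν (⋃ (w : Fin k → Bool) (n : ℕ) (_ : q ∈ C h k w n ∧
        pw (fun i => p i / lam i ^ (s : ℝ) / γ) k w ≤ c ∧ pw lam k w * (2 * 10 ^ n) < r), C h k w n)
      ≤ ENNReal.ofReal (c * r ^ (s : ℝ) * γ ^ k) := by
  by_cases hex : ∃ (w : Fin k → Bool) (n : ℕ), q ∈ C h k w n ∧
        pw (fun i => p i / lam i ^ (s : ℝ) / γ) k w ≤ c ∧ pw lam k w * (2 * 10 ^ n) < r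
  · obtain ⟨w, n, hq, hw, hl⟩ := hex
    have hsub : (⋃ (w : Fin k → Bool) (n : ℕ) (_ : q ∈ C h k w n ∧
        pw (fun i => p i / lam i ^ (s : ℝ) / γ) k w ≤ c ∧ pw lam k w * (2 * 10 ^ n) < r), C h k w n)
        ⊆ C h k w n := by
      refine Set.iUnion_subset fun w' => Set.iUnion_subset fun n' => Set.iUnion_subset fun hh => ?_
      obtain ⟨rfl, rfl⟩ := C_unique S hq hh.1
      exact subset_rfl
    refine (measure_mono hsub).trans ?_
    have hlp := pw_pos lam_pos k w
    have hle : ν (C h k w n) ≤ ENNReal.ofReal (pw p k w) := by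
      rw [C, nu_Hw S k w (B_sub_U n)]
      calc _ ≤ ENNReal.ofReal (pw p k w) * 1 := by gcongr; exact prob_le_one
        _ = _ := mul_one _
    refine hle.trans (ENNReal.ofReal_le_ofReal ?_)
    rw [pw_quot, pw_rpow lam_pos, div_le_iff₀ (by positivity),
      div_le_iff₀ (Real.rpow_pos_of_pos hlp _)] at hw
    have h1 : pw lam k w ≤ r := by
      have : (1 : ℝ) ≤ 10 ^ n := one_le_pow₀ (by norm_num)
      nlinarith
    have h2 := Real.rpow_le_rpow hlp.le h1 s.2
    calc pw p k w ≤ c * γ ^ k * pw lam k w ^ (s : ℝ) := hw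
      _ ≤ c * γ ^ k * r ^ (s : ℝ) := mul_le_mul_of_nonneg_left h2 (by positivity)
      _ = _ := by ring
  · have : (⋃ (w : Fin k → Bool) (n : ℕ) (_ : q ∈ C h k w n ∧
        pw (fun i => p i / lam i ^ (s : ℝ) / γ) k w ≤ c ∧ pw lam k w * (2 * 10 ^ n) < r), C h k w n)
        = ∅ := by
      rw [Set.eq_empty_iff_forall_notMem]
      intro x hx
      simp only [Set.mem_iUnion] at hx
      obtain ⟨w, n, hh, -⟩ := hx
      exact hex ⟨w, n, hh⟩
    rw [this, measure_empty]; exact zero_le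

def Gd (h : Bool → ℝ → ℝ) (g : Bool → ℝ) (c : ℝ) : Set ℝ :=
  (⋂ k, X h k) \ ⋃ k, bad h g c k

lemma Gd_meas (S : Sys h p ν) (g : Bool → ℝ) (c : ℝ) : MeasurableSet (Gd h g c) :=
  (MeasurableSet.iInter fun k => X_meas S k).diff (MeasurableSet.iUnion fun k => bad_meas S g c k)

lemma frost [IsProbabilityMeasure ν] (S : Sys h p ν) (s : ℝ≥0) {γ c r : ℝ}
    (hγ0 : 0 < γ) (hγ1 : γ < 1) (hc : 0 < c) (hr : 0 < r) (hr2 : r ≤ 2) (z : ℝ) (J : Set ℝ)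
    (hJ : ∀ x ∈ J, |x - z| ≤ r) :
    ν (J ∩ Gd h (fun i => p i / lam i ^ (s : ℝ) / γ) c) ≤
      ENNReal.ofReal (162 * (c * (1 - γ)⁻¹) * r ^ (s : ℝ)) := by
  set g : Bool → ℝ := fun i => p i / lam i ^ (s : ℝ) / γ with hg
  let E : ℝ → ℕ → Set ℝ := fun q k => ⋃ (w : Fin k → Bool) (n : ℕ) (_ : q ∈ C h k w n ∧
        pw g k w ≤ c ∧ pw lam k w * (2 * 10 ^ n) < r), C h k w n
  have hsub : J ∩ Gd h g c ⊆ ⋃ j ∈ Finset.range 162, ⋃ k, E (z - 2 * r + j * (r / 40)) k := by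
    rintro x ⟨hxJ, hxX, hxb⟩
    rw [Set.mem_iInter] at hxX
    have hxm : ∃ m, x ∈ B m := by
      obtain ⟨w, n, hh⟩ := Set.mem_iUnion₂.1 (hxX 0)
      obtain ⟨m, hm⟩ := Set.mem_iUnion.1 (C_sub_U S 0 w n hh)
      exact ⟨m, hm⟩
    obtain ⟨m, hm⟩ := hxm
    have hm1 : (1 : ℝ) ≤ 10 ^ m := one_le_pow₀ (by norm_num)
    obtain ⟨k, hk⟩ := exists_pow_lt_of_lt_one (show (0 : ℝ) < r / (2 * 10 ^ m) by positivity)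
      (show (1 / 2 : ℝ) < 1 by norm_num)
    rw [lt_div_iff₀ (by positivity)] at hk
    obtain ⟨w, n, hwn⟩ := Set.mem_iUnion₂.1 (hxX k)
    have h1 := C_small S k w n m x hwn hm
    obtain ⟨k', w', n', hx', hl, hu⟩ := C_exists S k w n m x r hwn hm (by linarith) (by linarith)
    have hgood : pw g k' w' ≤ c := by
      by_contra hcon
      rw [not_le] at hcon
      exact hxb (Set.mem_iUnion.2 ⟨k', Set.mem_iUnion₂.2 ⟨w', by simpa using hcon,
        Set.mem_iUnion.2 ⟨n', hx'⟩⟩⟩)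
    obtain ⟨u, v, e, e'⟩ := C_eq S k' w' n'
    have hxuv : x ∈ Set.Ioo u v := e ▸ hx'
    have hxz := abs_le.1 (hJ x hxJ)
    have hu0 : 0 ≤ (u - z + 2 * r) / (r / 40) := div_nonneg (by linarith [hxuv.1, hxuv.2]) (by positivity)
    have f1 := Nat.floor_le hu0
    have f2 := Nat.lt_floor_add_one ((u - z + 2 * r) / (r / 40))
    set j0 := ⌊(u - z + 2 * r) / (r / 40)⌋₊ with hj0
    rw [le_div_iff₀ (by positivity)] at f1
    rw [div_lt_iff₀ (by positivity)] at f2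
    have hj : j0 + 1 < 162 := by
      by_contra hcon
      have : (161 : ℝ) ≤ j0 := by exact_mod_cast (by omega : 161 ≤ j0)
      have h3 : 161 * (r / 40) ≤ j0 * (r / 40) := by gcongr
      linarith [hxuv.1, hxuv.2]
    refine Set.mem_iUnion₂.2 ⟨j0 + 1, Finset.mem_range.2 hj, Set.mem_iUnion.2 ⟨k', ?_⟩⟩
    simp only [E, Set.mem_iUnion]
    refine ⟨w', n', ⟨?_, hgood, hu⟩, hx'⟩
    rw [e]
    push_cast
    constructor <;> linarith
  have hE : ∀ q, ν (⋃ k, E q k) ≤ ENNReal.ofReal (c * (1 - γ)⁻¹ * r ^ (s : ℝ)) := by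
    intro q
    have hpos : 0 ≤ c * r ^ (s : ℝ) := mul_nonneg hc.le (Real.rpow_nonneg hr.le _)
    calc ν (⋃ k, E q k) ≤ ∑' k, ν (E q k) := measure_iUnion_le _
      _ ≤ ∑' k, ENNReal.ofReal (c * r ^ (s : ℝ) * γ ^ k) :=
          ENNReal.tsum_le_tsum fun k => nu_E S s hγ0 hc hr q k
      _ = _ := by
          rw [← ENNReal.ofReal_tsum_of_nonneg (fun k => mul_nonneg hpos (by positivity))
            ((summable_geometric_of_lt_one hγ0.le hγ1).mul_left _),
            ((hasSum_geometric_of_lt_one hγ0.le hγ1).mul_left _).tsum_eq]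
          congr 1; ring
  calc ν (J ∩ Gd h g c) ≤ _ := measure_mono hsub
    _ ≤ ∑ j ∈ Finset.range 162, ν (⋃ k, E (z - 2 * r + j * (r / 40)) k) :=
        measure_biUnion_finset_le _ _
    _ ≤ ∑ j ∈ Finset.range 162, ENNReal.ofReal (c * (1 - γ)⁻¹ * r ^ (s : ℝ)) :=
        Finset.sum_le_sum fun j _ => hE _
    _ = _ := by
        rw [Finset.sum_const, Finset.card_range, nsmul_eq_mul,
          show (162 : ℝ) * (c * (1 - γ)⁻¹) * r ^ (s : ℝ) = 162 * (c * (1 - γ)⁻¹ * r ^ (s : ℝ)) by ring,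
          ENNReal.ofReal_mul (p := 162) (by norm_num)]
        norm_num only [ENNReal.ofReal_ofNat, Nat.cast_ofNat]

lemma nu_Gd_compl [IsProbabilityMeasure ν] (S : Sys h p ν) {g : Bool → ℝ} (gpos : ∀ i, 0 < g i)
    {t c : ℝ} (ht : 0 < t) (hc : 0 < c) (hρ : ∑ i, p i * g i ^ t < 1) :
    ν (Gd h g c)ᶜ ≤ ENNReal.ofReal ((c ^ t)⁻¹ * (1 - ∑ i, p i * g i ^ t)⁻¹) := by
  have hρ0 : 0 ≤ ∑ i, p i * g i ^ t :=
    Finset.sum_nonneg fun i _ => mul_nonneg (S.ppos i).le (Real.rpow_nonneg (gpos i).le _)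
  have e : (Gd h g c)ᶜ = (⋃ k, (X h k)ᶜ) ∪ ⋃ k, bad h g c k := by
    rw [Gd, Set.sdiff_eq, Set.compl_inter, compl_compl, Set.compl_iInter]
  rw [e]
  calc _ ≤ ν (⋃ k, (X h k)ᶜ) + ν (⋃ k, bad h g c k) := measure_union_le _ _
    _ = ν (⋃ k, bad h g c k) := by rw [measure_iUnion_null fun k => nu_X S k, zero_add]
    _ ≤ ∑' k, ν (bad h g c k) := measure_iUnion_le _
    _ ≤ ∑' k, ENNReal.ofReal ((c ^ t)⁻¹ * (∑ i, p i * g i ^ t) ^ k) :=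
        ENNReal.tsum_le_tsum fun k => nu_bad S gpos ht hc k
    _ = _ := by
        rw [← ENNReal.ofReal_tsum_of_nonneg (fun k => mul_nonneg (by positivity) (by positivity))
            ((summable_geometric_of_lt_one hρ0 hρ).mul_left _),
            ((hasSum_geometric_of_lt_one hρ0 hρ).mul_left _).tsum_eq]

theorem lower [IsProbabilityMeasure ν] (S : Sys h p ν) (s : ℝ≥0) (hs : 0 < s)
    (hneg : ∑ i, p i * Real.log (p i / lam i ^ (s : ℝ)) < 0) : s ≤ lowerDimH ν := by
  have hs' : (0 : ℝ) < s := hs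
  have apos : ∀ i, 0 < p i / lam i ^ (s : ℝ) := fun i =>
    div_pos (S.ppos i) (Real.rpow_pos_of_pos (lam_pos i) _)
  obtain ⟨γ, t, hγ0, hγ1, ht, hρ⟩ := exists_gamma S.psum apos hneg
  set g : Bool → ℝ := fun i => p i / lam i ^ (s : ℝ) / γ with hg
  have gpos : ∀ i, 0 < g i := fun i => div_pos (apos i) hγ0
  refine le_iInf₂ fun A hA => ?_
  obtain ⟨c, hc, hcA⟩ : ∃ c : ℝ, 0 < c ∧ ν (Gd h g c)ᶜ < ν A := by
    have hlim : Tendsto (fun c : ℝ => ENNReal.ofReal ((c ^ t)⁻¹ * (1 - ∑ i, p i * g i ^ t)⁻¹))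
        atTop (nhds 0) := by
      rw [← ENNReal.ofReal_zero]
      apply ENNReal.tendsto_ofReal
      simpa using (_root_.tendsto_rpow_atTop ht).inv_tendsto_atTop.mul_const
        ((1 - ∑ i, p i * g i ^ t)⁻¹)
    obtain ⟨c, hc1, hc2⟩ := ((hlim.eventually (gt_mem_nhds hA)).and (eventually_gt_atTop 0)).exists
    exact ⟨c, hc2, (nu_Gd_compl S gpos ht hc2 hρ).trans_lt hc1⟩
  have hpos : 0 < ν (A ∩ Gd h g c) := by
    by_contra hcon
    rw [not_lt, nonpos_iff_eq_zero] at hcon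
    have : ν A ≤ ν (Gd h g c)ᶜ := by
      calc ν A ≤ ν ((A ∩ Gd h g c) ∪ (Gd h g c)ᶜ) := measure_mono fun x hx => by
            by_cases hxg : x ∈ Gd h g c
            · exact Or.inl ⟨hx, hxg⟩
            · exact Or.inr hxg
        _ ≤ _ := measure_union_le _ _
        _ = _ := by rw [hcon, zero_add]
    exact absurd hcA (not_lt.2 this)
  set Kc : ℝ := 162 * (c * (1 - γ)⁻¹) with hKc
  have hKc0 : 0 < Kc := by
    have : 0 < 1 - γ := by linarith
    positivity
  have hK0 : ENNReal.ofReal Kc ≠ 0 := by simpa using hKc0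
  have hle : (ENNReal.ofReal Kc)⁻¹ • ν.restrict (Gd h g c) ≤ Measure.hausdorffMeasure (s : ℝ) := by
    refine Measure.le_hausdorffMeasure _ _ 1 one_pos fun J hJ => ?_
    rw [Measure.smul_apply, Measure.restrict_apply' (Gd_meas S g c), smul_eq_mul,
      ENNReal.inv_mul_le_iff hK0 ENNReal.ofReal_ne_top]
    rcases J.eq_empty_or_nonempty with rfl | ⟨z, hz⟩
    · simp
    have hfin : ediam J ≠ ∞ := ne_top_of_le_ne_top one_ne_top hJ
    set d : ℝ := (ediam J).toReal with hd
    have hd1 : d ≤ 1 := by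
      rw [hd]; exact ENNReal.toReal_le_of_le_ofReal zero_le_one (by simpa using hJ)
    have hd0 : 0 ≤ d := ENNReal.toReal_nonneg
    have hed : ediam J = ENNReal.ofReal d := (ENNReal.ofReal_toReal hfin).symm
    have hJz : ∀ x ∈ J, |x - z| ≤ d := by
      intro x hx
      rw [← Real.dist_eq, dist_edist]
      exact ENNReal.toReal_mono hfin (edist_le_ediam_of_mem hx hz)
    have hlim : Tendsto (fun r : ℝ => ENNReal.ofReal (Kc * r ^ (s : ℝ))) (nhdsWithin d (Set.Ioi d))
        (nhds (ENNReal.ofReal (Kc * d ^ (s : ℝ)))) := by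
      apply ENNReal.tendsto_ofReal
      exact (((Real.continuousAt_rpow_const d (s : ℝ) (Or.inr hs'.le)).tendsto).const_mul Kc).mono_left
        nhdsWithin_le_nhds
    have hfinal : ν (J ∩ Gd h g c) ≤ ENNReal.ofReal (Kc * d ^ (s : ℝ)) := by
      refine ge_of_tendsto hlim ?_
      filter_upwards [Ioo_mem_nhdsGT (show d < 2 by linarith)] with r hr
      exact frost S s hγ0 hγ1 hc (by linarith [hr.1]) hr.2.le z J
        fun x hx => (hJz x hx).trans hr.1.le
    rwa [ENNReal.ofReal_mul hKc0.le, ← ENNReal.ofReal_rpow_of_nonneg hd0 hs'.le, ← hed] at hfinal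
  apply le_dimH_of_hausdorffMeasure_ne_zero
  have h1 := hle A
  rw [Measure.smul_apply, Measure.restrict_apply' (Gd_meas S g c), smul_eq_mul] at h1
  have h2 : 0 < (ENNReal.ofReal Kc)⁻¹ * ν (A ∩ Gd h g c) :=
    ENNReal.mul_pos (ENNReal.inv_ne_zero.2 ENNReal.ofReal_ne_top) hpos.ne'
  exact (h2.trans_le h1).ne'


section concrete

variable {h₁ h₂ : Homeomorph ℝ ℝ} {p₁ p₂ : ℝ}

lemma strictMono_of (hf₁' : ∀ x : ℝ, x ≤ 3 → h₁ x = x / 20 + 1) : StrictMono h₁ := by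
  rcases h₁.continuous.strictMono_of_inj h₁.injective with H | H
  · exact H
  · have := H (show (0 : ℝ) < 1 by norm_num)
    rw [hf₁' 0 (by norm_num), hf₁' 1 (by norm_num)] at this
    norm_num at this

lemma iterate_base (hf₁' : ∀ x : ℝ, x ≤ 3 → h₁ x = x / 20 + 1) {x : ℝ} (hx : x ≤ 3) (k : ℕ) :
    h₁^[k] x ≤ 3 ∧ h₁^[k] x - 20 / 19 = (x - 20 / 19) * (1 / 20) ^ k := by
  induction k with
  | zero => simp [hx]
  | succ k ih =>
    rw [Function.iterate_succ_apply', hf₁' _ ih.1]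
    refine ⟨by linarith [ih.1], ?_⟩
    rw [pow_succ, ← mul_assoc, ← ih.2]
    ring

lemma reach_base (hf₁' : ∀ x : ℝ, x ≤ 3 → h₁ x = x / 20 + 1) {x : ℝ} (hx : x ≤ 3) :
    ∃ k, h₁^[k] x ∈ U := by
  obtain ⟨k, hk⟩ := exists_pow_lt_of_lt_one
    (show (0 : ℝ) < (1 / 19) / (|x - 20 / 19| + 1) by positivity)
    (show (1 / 20 : ℝ) < 1 by norm_num)
  rw [lt_div_iff₀ (by positivity)] at hk
  obtain ⟨-, h2⟩ := iterate_base hf₁' hx k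
  have hp : (0 : ℝ) < (1 / 20) ^ k := by positivity
  have h3 : |h₁^[k] x - 20 / 19| < 1 / 19 := by
    rw [h2, abs_mul, abs_of_pos hp]
    nlinarith
  rw [abs_lt] at h3
  refine ⟨k, B_sub_U 0 ⟨?_, ?_⟩⟩
  · rw [pow_zero]; linarith [h3.1]
  · rw [pow_zero]; linarith [h3.2]

lemma reach (hf₁ : ∀ n : ℕ, 0 < n → ∀ x ∈ Set.Ioo ((10 : ℝ) ^ n) (3 * 10 ^ n),
      h₁ x = x / 20 + 15 * 10 ^ n / 100)
    (hf₁' : ∀ x : ℝ, x ≤ 3 → h₁ x = x / 20 + 1) (n : ℕ) :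
    ∀ x : ℝ, x < 3 * 10 ^ n → ∃ k, h₁^[k] x ∈ U := by
  induction n with
  | zero => intro x hx; exact reach_base hf₁' (by rw [pow_zero] at hx; linarith)
  | succ n ih =>
    intro x hx
    have h10 : (0 : ℝ) < 10 ^ (n + 1) := by positivity
    obtain ⟨y, hy1, hy2⟩ := exists_between
      (show max x (10 ^ (n + 1)) < 3 * 10 ^ (n + 1) from max_lt hx (by linarith))
    have h1 : h₁ x < h₁ y := strictMono_of hf₁' (lt_of_le_of_lt (le_max_left _ _) hy1)
    rw [hf₁ (n + 1) (by omega) y ⟨lt_of_le_of_lt (le_max_right _ _) hy1, hy2⟩] at h1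
    rw [pow_succ] at h1 hy2
    obtain ⟨k, hk⟩ := ih (h₁ x) (by linarith)
    exact ⟨k + 1, by rwa [Function.iterate_succ_apply]⟩

lemma reach_all (hf₁ : ∀ n : ℕ, 0 < n → ∀ x ∈ Set.Ioo ((10 : ℝ) ^ n) (3 * 10 ^ n),
      h₁ x = x / 20 + 15 * 10 ^ n / 100)
    (hf₁' : ∀ x : ℝ, x ≤ 3 → h₁ x = x / 20 + 1) (x : ℝ) : ∃ k, h₁^[k] x ∈ U := by
  obtain ⟨n, hn⟩ := pow_unbounded_of_one_lt x (show (1 : ℝ) < 10 by norm_num)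
  have : (0 : ℝ) < 10 ^ n := by positivity
  exact reach hf₁ hf₁' n x (by linarith)

lemma full_of_reach {f₁ f₂ : ℝ → ℝ} [IsProbabilityMeasure ν] (hp₁ : 0 < p₁) (hp₂ : 0 < p₂)
    (hp : p₁ + p₂ = 1)
    (hinv : ∀ A, ν A = ENNReal.ofReal p₁ * ν (f₁ ⁻¹' A) + ENNReal.ofReal p₂ * ν (f₂ ⁻¹' A))
    (hf₁m : Measurable f₁)
    (hU₁ : ∀ x ∈ U, f₁ x ∈ U) (hU₂ : ∀ x ∈ U, f₂ x ∈ U) (hr : ∀ x, ∃ k, f₁^[k] x ∈ U) :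
    ν Uᶜ = 0 := by
  have hUm : MeasurableSet U := MeasurableSet.iUnion fun n => measurableSet_Ioo
  have s1 : f₁ ⁻¹' Uᶜ ⊆ Uᶜ := fun x hx hxU => hx (hU₁ x hxU)
  have s2 : f₂ ⁻¹' Uᶜ ⊆ Uᶜ := fun x hx hxU => hx (hU₂ x hxU)
  have hz : ν (Uᶜ \ f₁ ⁻¹' Uᶜ) = 0 := by
    rw [measure_sdiff s1 (hf₁m hUm.compl).nullMeasurableSet (measure_ne_top _ _), tsub_eq_zero_iff_le]
    have e := hinv Uᶜ
    have l2 := measure_mono (μ := ν) s2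
    have hle : ν Uᶜ ≤ ENNReal.ofReal p₁ * ν (f₁ ⁻¹' Uᶜ) + ENNReal.ofReal p₂ * ν Uᶜ := by
      calc ν Uᶜ = _ := e
        _ ≤ _ := by gcongr
    have hr1 := ENNReal.toReal_mono (by finiteness) hle
    rw [ENNReal.toReal_add (by finiteness) (by finiteness), ENNReal.toReal_mul, ENNReal.toReal_mul,
      ENNReal.toReal_ofReal hp₁.le, ENNReal.toReal_ofReal hp₂.le] at hr1
    rw [← ENNReal.toReal_le_toReal (measure_ne_top _ _) (measure_ne_top _ _)]
    have : p₂ = 1 - p₁ := by linarith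
    rw [this] at hr1
    exact le_of_mul_le_mul_left (by linarith) hp₁
  have hzk : ∀ k, ν (f₁^[k] ⁻¹' (Uᶜ \ f₁ ⁻¹' Uᶜ)) = 0 := by
    intro k
    induction k with
    | zero => exact hz
    | succ k ih =>
      rw [hinv, add_eq_zero, mul_eq_zero] at ih
      rcases ih.1 with h0 | h0
      · simp only [ENNReal.ofReal_eq_zero] at h0; linarith
      · rw [Function.iterate_succ, Set.preimage_comp]; exact h0
  refine measure_mono_null ?_ (measure_iUnion_null hzk)
  have key : ∀ k x, x ∈ Uᶜ → f₁^[k] x ∈ U → x ∈ ⋃ k, f₁^[k] ⁻¹' (Uᶜ \ f₁ ⁻¹' Uᶜ) := by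
    intro k
    induction k with
    | zero => intro x hx hk; exact absurd hk hx
    | succ k ih =>
      intro x hx hk
      by_cases hk' : f₁^[k] x ∈ U
      · exact ih x hx hk'
      · refine Set.mem_iUnion.2 ⟨k, hk', fun hc => hc ?_⟩
        rwa [Function.iterate_succ_apply'] at hk
  intro x hx
  obtain ⟨k, hk⟩ := hr x
  exact key k x hx hk

def hh (h₁ h₂ : Homeomorph ℝ ℝ) : Bool → ℝ → ℝ := fun b => cond b ⇑h₁ ⇑h₂

theorem sys_of
    (hf₁ : ∀ n : ℕ, 0 < n → ∀ x ∈ Set.Ioo ((10 : ℝ) ^ n) (3 * 10 ^ n),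
      h₁ x = x / 20 + 15 * 10 ^ n / 100)
    (hf₁' : ∀ x : ℝ, x ≤ 3 → h₁ x = x / 20 + 1)
    (hf₂ : ∀ n : ℕ, 0 < n → ∀ x ∈ Set.Ioo ((10 : ℝ) ^ n) (3 * 10 ^ n),
      h₂ x = 5 * x + 5 * 10 ^ n)
    (hf₂' : ∀ x : ℝ, x ≤ 3 → h₂ x = 5 * x + 5)
    (hp₁ : 0 < p₁) (hp₂ : 0 < p₂) (hp : p₁ + p₂ = 1)
    [IsProbabilityMeasure ν]
    (hinv : ν = ENNReal.ofReal p₁ • Measure.map (⇑h₁) ν +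
      ENNReal.ofReal p₂ • Measure.map (⇑h₂) ν) :
    Sys (hh h₁ h₂) (fun b => cond b p₁ p₂) ν := by
  have e2 : ∀ n x, x ∈ B n → h₂ x = 5 * x + 5 * 10 ^ n := by
    intro n x hx
    rcases Nat.eq_zero_or_pos n with rfl | hn
    · have := hx.2
      rw [pow_zero] at *
      rw [hf₂' x (by linarith)]; ring
    · exact hf₂ n hn x hx
  have e1z : ∀ x, x ∈ B 0 → h₁ x = x / 20 + 1 := fun x hx =>
    hf₁' x (by have := hx.2; rw [pow_zero] at this; linarith)
  have e1s : ∀ n x, x ∈ B (n + 1) → h₁ x = x / 20 + 3 / 2 * 10 ^ n := fun n x hx => by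
    rw [hf₁ (n + 1) (by omega) x hx, pow_succ]; ring
  have m1s : ∀ n x, x ∈ B (n + 1) → 2 * 10 ^ n < h₁ x ∧ h₁ x < 3 * 10 ^ n := by
    intro n x hx
    have a := hx.1
    have b := hx.2
    rw [e1s n x hx]
    rw [pow_succ] at a b
    constructor <;> linarith
  have m2 : ∀ n x, x ∈ B n → 10 ^ (n + 1) < h₂ x ∧ h₂ x < 2 * 10 ^ (n + 1) := by
    intro n x hx
    have a := hx.1
    have b := hx.2
    rw [e2 n x hx, pow_succ]
    constructor <;> linarith
  have maps1 : ∀ n x, x ∈ B n → h₁ x ∈ B (n - 1) := by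
    intro n x hx
    rcases n with _ | n
    · have a := hx.1
      have b := hx.2
      rw [pow_zero] at a b
      refine ⟨?_, ?_⟩ <;> rw [e1z x hx] <;> simp only [zero_tsub, pow_zero] <;> linarith
    · have := m1s n x hx
      have h10 : (0 : ℝ) < 10 ^ n := by positivity
      rw [Nat.add_sub_cancel]
      exact ⟨by linarith, this.2⟩
  have maps2 : ∀ n x, x ∈ B n → h₂ x ∈ B (n + 1) := by
    intro n x hx
    have := m2 n x hx
    have h10 : (0 : ℝ) < 10 ^ (n + 1) := by positivity
    exact ⟨this.1, by linarith⟩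
  have disj : ∀ x y, x ∈ U → y ∈ U → h₁ x ≠ h₂ y := by
    intro x y hx hy e
    obtain ⟨n, hn⟩ := Set.mem_iUnion.1 hx
    obtain ⟨m, hm⟩ := Set.mem_iUnion.1 hy
    have h1 := maps1 n x hn
    have h2 := maps2 m y hm
    rw [e] at h1
    have e' := B_unique h1 h2
    obtain rfl : n = (m + 1) + 1 := by omega
    have := m1s _ x hn
    have := m2 m y hm
    rw [e] at *
    linarith [this.2]
  have hinv' : ∀ A, ν A = ENNReal.ofReal p₁ * ν (h₁ ⁻¹' A) + ENNReal.ofReal p₂ * ν (h₂ ⁻¹' A) := by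
    intro A
    have := congrArg (fun m : Measure ℝ => m A) hinv
    simp only [Measure.add_apply, Measure.smul_apply, smul_eq_mul] at this
    rwa [h₁.measurableEmbedding.map_apply, h₂.measurableEmbedding.map_apply] at this
  constructor
  · rintro (_ | _) n x hx
    · exact maps2 n x hx
    · exact maps1 n x hx
  · rintro (_ | _) n
    · exact ⟨5 * 10 ^ n, fun x hx => e2 n x hx⟩
    · rcases n with _ | n
      · exact ⟨1, fun x hx => (e1z x hx).trans (by simp only [lam]; ring)⟩
      · exact ⟨3 / 2 * 10 ^ n, fun x hx => (e1s n x hx).trans (by simp only [lam]; ring)⟩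
  · rintro (_ | _) (_ | _) x y hx hy e
    · exact ⟨rfl, h₂.injective e⟩
    · exact absurd (Eq.symm e) (disj y x hy hx)
    · exact absurd e (disj x y hx hy)
    · exact ⟨rfl, h₁.injective e⟩
  · rintro (_ | _)
    · exact hp₂
    · exact hp₁
  · simpa using hp
  · refine full_of_reach hp₁ hp₂ hp hinv' h₁.continuous.measurable ?_ ?_ (reach_all hf₁ hf₁')
    · intro x hx
      obtain ⟨n, hn⟩ := Set.mem_iUnion.1 hx
      exact B_sub_U _ (maps1 n x hn)
    · intro x hx
      obtain ⟨n, hn⟩ := Set.mem_iUnion.1 hx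
      exact B_sub_U _ (maps2 n x hn)
  · intro A
    simpa [hh] using hinv' A

end concrete

end ExDim

/-- The example: an IFS of two homeomorphisms of `ℝ`, piecewise affine on the union of
the intervals `B_n = (10^n, 3·10^n)`, whose invariant measure has Hausdorff dimension
`(p₁ log p₁ + p₂ log p₂) / (−2 p₁ log 2 − (p₁ − p₂) log 5)`. -/
theorem example_dimension
    (h₁ h₂ : Homeomorph ℝ ℝ)
    (hf₁ : ∀ n : ℕ, 0 < n → ∀ x ∈ Set.Ioo ((10 : ℝ) ^ n) (3 * 10 ^ n),
      h₁ x = x / 20 + 15 * 10 ^ n / 100)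
    (hf₁' : ∀ x : ℝ, x ≤ 3 → h₁ x = x / 20 + 1)
    (hf₂ : ∀ n : ℕ, 0 < n → ∀ x ∈ Set.Ioo ((10 : ℝ) ^ n) (3 * 10 ^ n),
      h₂ x = 5 * x + 5 * 10 ^ n)
    (hf₂' : ∀ x : ℝ, x ≤ 3 → h₂ x = 5 * x + 5)
    -- constant probabilities
    (p₁ p₂ : ℝ) (hp₂ : p₂ = 1 - p₁) (hp₁0 : 0 < p₁) (hp₁1 : p₁ < 1)
    (hp₁big : Real.log (50 / 7) / Real.log (500 / 17) < p₁)
    -- the system is contracting on average on all of ℝ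
    (hcoa : ∃ b > (0 : ℝ), ∀ x y : ℝ, x ≠ y →
      p₁ * Real.log (|h₁ x - h₁ y| / |x - y|) +
        p₂ * Real.log (|h₂ x - h₂ y| / |x - y|) < -b)
    -- the (unique) invariant probability measure
    (ν : Measure ℝ) [IsProbabilityMeasure ν]
    (hinv : ν = ENNReal.ofReal p₁ • Measure.map (⇑h₁) ν +
      ENNReal.ofReal p₂ • Measure.map (⇑h₂) ν) :
    lowerDimH ν = upperDimH ν ∧
    upperDimH ν = ENNReal.ofReal
      ((p₁ * Real.log p₁ + p₂ * Real.log p₂) /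
        (-2 * p₁ * Real.log 2 - (p₁ - p₂) * Real.log 5)) := by
  have hp₂0 : 0 < p₂ := by linarith
  have S := ExDim.sys_of hf₁ hf₁' hf₂ hf₂' hp₁0 hp₂0 (by linarith) hinv
  have l2 : 0 < Real.log 2 := Real.log_pos (by norm_num)
  have l5 : 0 < Real.log 5 := Real.log_pos (by norm_num)
  have hhalf : 1 / 2 < p₁ := by
    refine lt_of_le_of_lt ?_ hp₁big
    rw [le_div_iff₀ (Real.log_pos (by norm_num))]
    have h1 : Real.log (500 / 17) ≤ Real.log ((50 / 7) ^ 2) :=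
      Real.log_le_log (by norm_num) (by norm_num)
    rw [Real.log_pow] at h1
    push_cast at h1
    linarith
  set Num := p₁ * Real.log p₁ + p₂ * Real.log p₂ with hNum
  set Den := -2 * p₁ * Real.log 2 - (p₁ - p₂) * Real.log 5 with hDen
  have hDen0 : Den < 0 := by
    rw [hDen]
    have : 0 < p₁ - p₂ := by linarith
    nlinarith [mul_pos hp₁0 l2, mul_pos this l5]
  have hNum0 : Num < 0 := by
    have a1 := mul_pos_of_neg_of_neg (Real.log_neg hp₁0 hp₁1) (neg_lt_zero.2 hp₁0)
    have a2 := mul_pos_of_neg_of_neg (Real.log_neg hp₂0 (by linarith)) (neg_lt_zero.2 hp₂0)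
    rw [hNum]; linarith
  have hD0 : 0 < Num / Den := div_pos_of_neg_of_neg hNum0 hDen0
  have l20 : Real.log (1 / 20) = -(2 * Real.log 2 + Real.log 5) := by
    rw [one_div, Real.log_inv, show (20 : ℝ) = 2 ^ 2 * 5 by norm_num,
      Real.log_mul (by norm_num) (by norm_num), Real.log_pow]
    push_cast; ring
  have sumU : ∀ s : ℝ, ∑ i, (fun b => cond b p₁ p₂) i *
      Real.log (ExDim.lam i ^ s / (fun b => cond b p₁ p₂) i) = s * Den - Num := by
    intro s
    simp only [Fintype.sum_bool, ExDim.lam, cond_true, cond_false]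
    rw [Real.log_div (by positivity) hp₁0.ne', Real.log_div (by positivity) hp₂0.ne',
      Real.log_rpow (by norm_num), Real.log_rpow (by norm_num), l20, hDen, hNum]
    ring
  have sumL : ∀ s : ℝ, ∑ i, (fun b => cond b p₁ p₂) i *
      Real.log ((fun b => cond b p₁ p₂) i / ExDim.lam i ^ s) = Num - s * Den := by
    intro s
    simp only [Fintype.sum_bool, ExDim.lam, cond_true, cond_false]
    rw [Real.log_div hp₁0.ne' (by positivity), Real.log_div hp₂0.ne' (by positivity),
      Real.log_rpow (by norm_num), Real.log_rpow (by norm_num), l20, hDen, hNum]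
    ring
  have hup : upperDimH ν ≤ ENNReal.ofReal (Num / Den) := by
    refine le_of_forall_gt_imp_ge_of_dense fun a ha => ?_
    rcases eq_or_ne a ∞ with rfl | hat
    · exact le_top
    lift a to ℝ≥0 using hat
    have ha' : Num / Den < a := by
      rw [← ENNReal.ofReal_coe_nnreal] at ha
      exact (ENNReal.ofReal_lt_ofReal_iff_of_nonneg hD0.le).1 ha
    refine ExDim.upper S a (by exact_mod_cast hD0.trans ha') ?_
    rw [sumU]
    rw [div_lt_iff_of_neg hDen0] at ha'
    linarith
  have hlow : ENNReal.ofReal (Num / Den) ≤ lowerDimH ν := by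
    refine le_of_forall_lt_imp_le_of_dense fun a ha => ?_
    rcases eq_or_ne a 0 with rfl | ha0
    · exact zero_le
    lift a to ℝ≥0 using ha.ne_top
    have ha' : (a : ℝ) < Num / Den := by
      rw [← ENNReal.ofReal_coe_nnreal] at ha
      exact (ENNReal.ofReal_lt_ofReal_iff_of_nonneg a.2).1 ha
    refine ExDim.lower S a (pos_iff_ne_zero.2 (by simpa using ha0)) ?_
    rw [sumL]
    rw [lt_div_iff_of_neg hDen0] at ha'
    linarith
  have hmid : lowerDimH ν ≤ upperDimH ν := by
    refine le_iInf₂ fun A hA => ?_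
    refine iInf₂_le A ?_
    by_contra hcon
    rw [not_lt, nonpos_iff_eq_zero] at hcon
    have h1 : ν Set.univ ≤ ν A + ν Aᶜ := by
      rw [← Set.union_compl_self A]; exact measure_union_le _ _
    rw [hcon, hA, measure_univ] at h1
    simp at h1
  exact ⟨le_antisymm hmid (hup.trans hlow), le_antisymm hup (hlow.trans hmid)⟩
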